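/- Consider the Rennala MVR iteration: let B₀ ≥ 1, B ≥ 1, p ∈ (0,1], γ > 0, x⁰ ∈ ℝ^d, and let ζ₁, …, ζ_{B₀} together with (ξ^{k,j})_{k≥0, 1≤j≤B} all be i.i.d. samples from μ, mutually independent. Set g⁰ = (1/B₀)∑_{j=1}^{B₀} ∇f(x⁰;ζ_j) and recursively x^{k+1} = x^k − γ g^k and g^{k+1} = (1/B)∑_{j=1}^B ∇f(x^{k+1};ξ^{k,j}) + (1−p)(g^k − (1/B)∑_{j=1}^B ∇f(x^k;ξ^{k,j})). If the stepsize satisfies γ ≤ 1/(2L̄(1 + (1−p)/√(pB))), then for every K ≥ 1, (1/K)∑_{k=0}^{K−1} E[‖∇f(x^k)‖²] ≤ 2Δ/(γK) + 2pσ²/B + (1/(pK))·(2σ²/B₀), where Δ = f(x⁰) − f*. -/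

import Mathlib

open MeasureTheory

/-- One step of the Rennala MVR recursion: given the initialization samples `ζ` and the
per-iteration samples `ξ`, `rennalaMVR G γ p B₀ B x0 ζ ξ k = (xᵏ, gᵏ)` where
`g⁰ = (1/B₀)∑ⱼ G x⁰ ζⱼ`, `x^{k+1} = x^k − γ g^k` and
`g^{k+1} = (1/B)∑ⱼ G x^{k+1} ξ^{k,j} + (1−p)(g^k − (1/B)∑ⱼ G x^k ξ^{k,j})`. -/
noncomputable def rennalaMVR {d : ℕ} {Ω : Type*}
    (G : EuclideanSpace ℝ (Fin d) → Ω → EuclideanSpace ℝ (Fin d))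
    (γ p : ℝ) (B₀ B : ℕ) (x0 : EuclideanSpace ℝ (Fin d))
    (ζ : Fin B₀ → Ω) (ξ : ℕ → Fin B → Ω) :
    ℕ → EuclideanSpace ℝ (Fin d) × EuclideanSpace ℝ (Fin d)
  | 0 => (x0, (B₀ : ℝ)⁻¹ • ∑ j, G x0 (ζ j))
  | k + 1 =>
    let prev := rennalaMVR G γ p B₀ B x0 ζ ξ k
    let x1 := prev.1 - γ • prev.2
    (x1,
      (B : ℝ)⁻¹ • ∑ j, G x1 (ξ k j)
        + (1 - p) • (prev.2 - (B : ℝ)⁻¹ • ∑ j, G prev.1 (ξ k j)))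

/-!
Along the trajectory let `V k` be the expected squared error of `gᵏ` as an estimator of `∇f(xᵏ)`.
The minibatch `ξᵏ` is independent of `(xᵏ, gᵏ)`, so the error becomes `1 - p` times the old error
plus a centred sampling noise that is orthogonal to it. That noise combines `p` times the raw
oracle noise with `1 - p` times the noise of an oracle difference, and mean-squared smoothness
bounds the latter by the movement `‖xᵏ⁺¹ - xᵏ‖`. Hence `V` contracts by `1 - p` up to a variance
and a movement term. In the Lyapunov function `E f(xᵏ) + γ / (2p) V k` the contraction pays for
the gradient error in the descent inequality, and the stepsize condition makes the descent absorb
the movement term.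
-/

open ProbabilityTheory
open scoped NNReal InnerProductSpace

section Descent

variable {E : Type*} [NormedAddCommGroup E] [InnerProductSpace ℝ E] [CompleteSpace E]
  {f : E → ℝ} {L : ℝ≥0}

theorem hasDerivAt_comp_add_smul (hf : Differentiable ℝ f) (x v : E) (t : ℝ) :
    HasDerivAt (fun t : ℝ => f (x + t • v)) ⟪gradient f (x + t • v), v⟫_ℝ t := by
  have hline : HasDerivAt (fun t : ℝ => x + t • v) v t := by
    simpa using ((hasDerivAt_id t).smul_const v).const_add x
  simpa only [InnerProductSpace.toDual_apply_apply, Function.comp_def] using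
    (hf (x + t • v)).hasGradientAt.hasFDerivAt.comp_hasDerivAt t hline

theorem apply_add_le_of_lipschitzWith_gradient (hf : Differentiable ℝ f)
    (hL : LipschitzWith L (gradient f)) (x v : E) :
    f (x + v) ≤ f x + ⟪gradient f x, v⟫_ℝ + L / 2 * ‖v‖ ^ 2 := by
  let r : ℝ → ℝ := fun t => f (x + t • v) - (t * ⟪gradient f x, v⟫_ℝ + L / 2 * ‖v‖ ^ 2 * t ^ 2)
  have hr : ∀ t, HasDerivAt r (⟪gradient f (x + t • v), v⟫_ℝ -
      (⟪gradient f x, v⟫_ℝ + L / 2 * ‖v‖ ^ 2 * (2 * t))) t := fun t =>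
    (hasDerivAt_comp_add_smul hf x v t).sub
      ((hasDerivAt_mul_const _).add (by simpa using (hasDerivAt_pow 2 t).const_mul _))
  have hanti : AntitoneOn r (Set.Icc 0 1) := by
    refine antitoneOn_of_deriv_nonpos (convex_Icc 0 1)
      (fun t _ => (hr t).continuousAt.continuousWithinAt)
      (fun t _ => (hr t).differentiableAt.differentiableWithinAt) fun t ht => ?_
    rw [interior_Icc] at ht
    have hgrad : ‖gradient f (x + t • v) - gradient f x‖ ≤ L * (t * ‖v‖) := by
      simpa [norm_smul, abs_of_pos ht.1] using hL.norm_sub_le (x + t • v) x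
    have hinner : ⟪gradient f (x + t • v) - gradient f x, v⟫_ℝ ≤ L * (t * ‖v‖) * ‖v‖ :=
      (real_inner_le_norm _ _).trans (by gcongr)
    rw [inner_sub_left] at hinner
    rw [(hr t).deriv]
    linarith
  have hle : r 1 ≤ r 0 := hanti (by simp) (by simp) zero_le_one
  simp only [r, one_smul, zero_smul, add_zero] at hle
  linarith

theorem inexact_gradient_step_le (hf : Differentiable ℝ f) (hL : LipschitzWith L (gradient f))
    {γ : ℝ} (hγ : γ ≠ 0) (x v : E) :
    f (x - γ • v) + γ / 2 * ‖gradient f x‖ ^ 2 + (1 / (2 * γ) - L / 2) * ‖γ • v‖ ^ 2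
      ≤ f x + γ / 2 * ‖v - gradient f x‖ ^ 2 := by
  have hdescent := apply_add_le_of_lipschitzWith_gradient hf hL x (-(γ • v))
  rw [← sub_eq_add_neg, norm_neg, inner_neg_right, inner_smul_right] at hdescent
  have hpolar : ‖v - gradient f x‖ ^ 2
      = ‖v‖ ^ 2 - 2 * ⟪gradient f x, v⟫_ℝ + ‖gradient f x‖ ^ 2 := by
    rw [norm_sub_sq_real, real_inner_comm]
  have hstep : 1 / (2 * γ) * ‖γ • v‖ ^ 2 = γ / 2 * ‖v‖ ^ 2 := by
    rw [norm_smul, mul_pow, Real.norm_eq_abs, sq_abs]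
    field_simp
  rw [hpolar, sub_mul, hstep]
  linarith

end Descent

section SecondMoments

variable {S : Type*} [MeasurableSpace S] {P : Measure S}
  {E : Type*} [NormedAddCommGroup E] [InnerProductSpace ℝ E]

theorem integral_norm_add_sq_of_integral_inner_eq_zero {X Y : S → E} (hX : MemLp X 2 P)
    (hY : MemLp Y 2 P) (hXY : ∫ s, ⟪X s, Y s⟫_ℝ ∂P = 0) :
    ∫ s, ‖X s + Y s‖ ^ 2 ∂P = ∫ s, ‖X s‖ ^ 2 ∂P + ∫ s, ‖Y s‖ ^ 2 ∂P := by
  have hX2 := hX.integrable_norm_pow two_ne_zero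
  have hY2 := hY.integrable_norm_pow two_ne_zero
  have hsum2 : Integrable (fun s => ‖X s + Y s‖ ^ 2) P :=
    (hX.add hY).integrable_norm_pow two_ne_zero
  have hdiff2 : Integrable (fun s => ‖X s + Y s‖ ^ 2 - ‖X s‖ ^ 2) P := hsum2.sub hX2
  have hpolar : ∀ s, ‖X s + Y s‖ ^ 2 - ‖X s‖ ^ 2 - ‖Y s‖ ^ 2 = 2 * ⟪X s, Y s⟫_ℝ := fun s => by
    rw [norm_add_sq_real]; ring
  have hdefect := integral_congr_ae (μ := P) (.of_forall hpolar)
  rw [integral_sub hdiff2 hY2, integral_sub hsum2 hX2, integral_const_mul, hXY] at hdefect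
  linarith

variable [CompleteSpace E]

theorem integral_norm_const_add_sq [IsProbabilityMeasure P] {Z : S → E} (hZ : MemLp Z 2 P)
    (hZ0 : ∫ s, Z s ∂P = 0) (c : E) :
    ∫ s, ‖c + Z s‖ ^ 2 ∂P = ‖c‖ ^ 2 + ∫ s, ‖Z s‖ ^ 2 ∂P := by
  rw [integral_norm_add_sq_of_integral_inner_eq_zero (memLp_const c) hZ, integral_const,
    probReal_univ, one_smul]
  rw [integral_inner (hZ.integrable one_le_two), hZ0, inner_zero_right]

theorem sq_norm_integral_add_integral_norm_sub_sq [IsProbabilityMeasure P] {W : S → E}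
    (hW : MemLp W 2 P) :
    ‖∫ s, W s ∂P‖ ^ 2 + ∫ s, ‖W s - ∫ t, W t ∂P‖ ^ 2 ∂P = ∫ s, ‖W s‖ ^ 2 ∂P := by
  have hcentered : ∫ s, W s - ∫ t, W t ∂P ∂P = 0 := by
    rw [integral_sub (hW.integrable one_le_two) (integrable_const _), integral_const,
      probReal_univ, one_smul, sub_self]
  simpa only [Pi.sub_apply, add_sub_cancel] using
    (integral_norm_const_add_sq (hW.sub (memLp_const _)) hcentered (∫ t, W t ∂P)).symm

variable [MeasurableSpace E] [BorelSpace E]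

theorem integral_inner_eq_zero_of_indepFun {X Y : S → E} (hXY : X ⟂ᵢ[P] Y)
    (hX : Integrable X P) (hY : Integrable Y P) (hY0 : ∫ s, Y s ∂P = 0) :
    ∫ s, ⟪X s, Y s⟫_ℝ ∂P = 0 :=
  (hXY.integral_bilin hX hY (innerSL ℝ)).trans (by rw [hY0, map_zero])

variable [SecondCountableTopology E]

theorem integral_norm_sum_sq_of_iIndepFun [IsFiniteMeasure P] {ι : Type*} {Y : ι → S → E}
    (hindep : iIndepFun Y P) (hY : ∀ i, MemLp (Y i) 2 P) (hY0 : ∀ i, ∫ s, Y i s ∂P = 0)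
    (t : Finset ι) :
    ∫ s, ‖∑ i ∈ t, Y i s‖ ^ 2 ∂P = ∑ i ∈ t, ∫ s, ‖Y i s‖ ^ 2 ∂P := by
  classical
  induction t using Finset.induction_on with
  | empty => simp
  | insert i t hi ih =>
    have hsum : MemLp (fun s => ∑ j ∈ t, Y j s) 2 P := memLp_finsetSum t fun j _ => hY j
    have hsum_indep : (fun s => ∑ j ∈ t, Y j s) ⟂ᵢ[P] Y i := by
      simpa only [Finset.sum_apply, Finset.sum_fn] using
        hindep.indepFun_finsetSum_of_notMem₀ (fun j => (hY j).aemeasurable) hi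
    have horth := integral_inner_eq_zero_of_indepFun hsum_indep (hsum.integrable one_le_two)
      ((hY i).integrable one_le_two) (hY0 i)
    simp only [Finset.sum_insert hi]
    simp only [add_comm (Y i _)]
    rw [integral_norm_add_sq_of_integral_inner_eq_zero hsum (hY i) horth, ih, add_comm]

end SecondMoments

section Freezing

variable {A X : Type*} [MeasurableSpace A] [MeasurableSpace X] {h : A × X → ℝ} {b : A → ℝ}

theorem integrable_prod_and_integral_le {ρ : Measure A} {ν : Measure X} [SFinite ρ] [SFinite ν]
    (hm : Measurable h) (h0 : ∀ q, 0 ≤ h q) (hb : Integrable b ρ)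
    (hint : ∀ a, Integrable (fun x => h (a, x)) ν) (hle : ∀ a, ∫ x, h (a, x) ∂ν ≤ b a) :
    Integrable h (ρ.prod ν) ∧ ∫ q, h q ∂ρ.prod ν ≤ ∫ a, b a ∂ρ := by
  have hsection : Integrable (fun a => ∫ x, h (a, x) ∂ν) ρ := by
    refine hb.mono' hm.aestronglyMeasurable.integral_prod_right' (.of_forall fun a => ?_)
    rw [Real.norm_of_nonneg (integral_nonneg fun x => h0 _)]
    exact hle a
  have hh : Integrable h (ρ.prod ν) := by
    rw [integrable_prod_iff hm.aestronglyMeasurable]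
    exact ⟨.of_forall hint, by simpa only [Real.norm_of_nonneg (h0 _)] using hsection⟩
  exact ⟨hh, (integral_prod h hh).trans_le (integral_mono hsection hb hle)⟩

theorem integrable_and_integral_le_of_indepFun {S : Type*} [MeasurableSpace S] {P : Measure S}
    [IsFiniteMeasure P] {ν : Measure X} {U : S → A} {W : S → X} (hindep : U ⟂ᵢ[P] W)
    (hU : AEMeasurable U P) (hW : HasLaw W ν P) (hm : Measurable h) (h0 : ∀ q, 0 ≤ h q)
    (hbm : Measurable b) (hb : Integrable (fun s => b (U s)) P)
    (hint : ∀ a, Integrable (fun x => h (a, x)) ν) (hle : ∀ a, ∫ x, h (a, x) ∂ν ≤ b a) :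
    Integrable (fun s => h (U s, W s)) P ∧ ∫ s, h (U s, W s) ∂P ≤ ∫ s, b (U s) ∂P := by
  have : IsFiniteMeasure ν := hW.map_eq ▸ inferInstance
  have hlaw : P.map (fun s => (U s, W s)) = (P.map U).prod ν := by
    rw [hindep.map_prod_eq_prod_map_map hU hW.aemeasurable, hW.map_eq]
  have hUW : AEMeasurable (fun s => (U s, W s)) P := hU.prodMk hW.aemeasurable
  obtain ⟨hh, hhb⟩ := integrable_prod_and_integral_le hm h0
    ((integrable_map_measure hbm.aestronglyMeasurable hU).2 hb) hint hle
  rw [← hlaw] at hh hhb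
  rw [integral_map hUW hm.aestronglyMeasurable, integral_map hU hbm.aestronglyMeasurable] at hhb
  exact ⟨hh.comp_aemeasurable hUW, hhb⟩

end Freezing

section SampleMean

variable {Ω E : Type*} [AddCommGroup E] [Module ℝ E] {n : ℕ}

/-- Empirical mean of `Z` over the minibatch `w`; it is `0` for the empty minibatch. -/
noncomputable def sampleMean (Z : Ω → E) (w : Fin n → Ω) : E :=
  (n : ℝ)⁻¹ • ∑ j, Z (w j)

theorem sampleMean_sub (Z Z' : Ω → E) (w : Fin n → Ω) :
    sampleMean (fun ξ => Z ξ - Z' ξ) w = sampleMean Z w - sampleMean Z' w := by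
  simp only [sampleMean, Finset.sum_sub_distrib, smul_sub]

theorem sampleMean_smul (a : ℝ) (Z : Ω → E) (w : Fin n → Ω) :
    sampleMean (fun ξ => a • Z ξ) w = a • sampleMean Z w := by
  simp only [sampleMean, ← Finset.smul_sum, smul_comm a]

theorem sampleMean_const (hn : 0 < n) (c : E) (w : Fin n → Ω) :
    sampleMean (fun _ => c) w = c := by
  have hn' : (n : ℝ) ≠ 0 := by positivity
  simp [sampleMean, ← Nat.cast_smul_eq_nsmul ℝ, hn']

end SampleMean

section SampleMeanMoments

variable {Ω E : Type*} [MeasurableSpace Ω] {μ : Measure Ω} [IsProbabilityMeasure μ]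
  [NormedAddCommGroup E] {Z : Ω → E} {n : ℕ}

theorem memLp_sampleMean [NormedSpace ℝ E] {q : ENNReal} (hZ : MemLp Z q μ) :
    MemLp (sampleMean (n := n) Z) q (Measure.pi fun _ => μ) :=
  (memLp_finsetSum _ fun j _ =>
    hZ.comp_measurePreserving (measurePreserving_eval _ j)).const_smul _

theorem integral_comp_minibatch_eval [NormedSpace ℝ E] (hZ : AEStronglyMeasurable Z μ)
    (j : Fin n) : ∫ w : Fin n → Ω, Z (w j) ∂(Measure.pi fun _ => μ) = ∫ ξ, Z ξ ∂μ :=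
  (measurePreserving_eval (fun _ : Fin n => μ) j).hasLaw.integral_comp hZ

theorem integral_sampleMean_eq_zero [NormedSpace ℝ E] (hZ : Integrable Z μ)
    (hZ0 : ∫ ξ, Z ξ ∂μ = 0) :
    ∫ w, sampleMean (n := n) Z w ∂(Measure.pi fun _ => μ) = 0 := by
  simp only [sampleMean]
  rw [integral_smul, integral_finsetSum _ fun j _ => integrable_comp_eval hZ]
  simp only [integral_comp_minibatch_eval hZ.aestronglyMeasurable, hZ0, Finset.sum_const_zero,
    smul_zero]

variable [InnerProductSpace ℝ E] [CompleteSpace E] [MeasurableSpace E] [BorelSpace E]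
  [SecondCountableTopology E]

theorem integral_norm_sampleMean_sq (hZ : MemLp Z 2 μ) (hZ0 : ∫ ξ, Z ξ ∂μ = 0) :
    ∫ w, ‖sampleMean (n := n) Z w‖ ^ 2 ∂(Measure.pi fun _ => μ) = (∫ ξ, ‖Z ξ‖ ^ 2 ∂μ) / n := by
  have hindep : iIndepFun (fun (j : Fin n) (w : Fin n → Ω) => Z (w j)) (Measure.pi fun _ => μ) :=
    iIndepFun_pi fun _ => hZ.aemeasurable
  have hsum := integral_norm_sum_sq_of_iIndepFun hindep
    (fun j => hZ.comp_measurePreserving (measurePreserving_eval _ j))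
    (fun j => (integral_comp_minibatch_eval hZ.aestronglyMeasurable j).trans hZ0) Finset.univ
  have hsq : ∀ j : Fin n, ∫ w : Fin n → Ω, ‖Z (w j)‖ ^ 2 ∂(Measure.pi fun _ => μ)
      = ∫ ξ, ‖Z ξ‖ ^ 2 ∂μ :=
    integral_comp_minibatch_eval (hZ.integrable_norm_pow two_ne_zero).aestronglyMeasurable
  simp only [sampleMean, norm_smul, mul_pow, integral_const_mul, hsum, hsq, Finset.sum_const,
    Finset.card_univ, Fintype.card_fin, nsmul_eq_mul, norm_inv, Real.norm_natCast]
  rcases eq_or_ne n 0 with rfl | hn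
  · simp
  · field_simp

theorem integral_norm_const_add_sampleMean_sq (hZ : MemLp Z 2 μ) (hZ0 : ∫ ξ, Z ξ ∂μ = 0) (c : E) :
    ∫ w, ‖c + sampleMean (n := n) Z w‖ ^ 2 ∂(Measure.pi fun _ => μ)
      = ‖c‖ ^ 2 + (∫ ξ, ‖Z ξ‖ ^ 2 ∂μ) / n := by
  rw [integral_norm_const_add_sq (memLp_sampleMean hZ)
    (integral_sampleMean_eq_zero (hZ.integrable one_le_two) hZ0),
    integral_norm_sampleMean_sq hZ hZ0]

end SampleMeanMoments

section Oracle

variable {Ω E F : Type*} [MeasurableSpace Ω] [NormedAddCommGroup E] [MeasurableSpace E]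
  [NormedAddCommGroup F] [NormedSpace ℝ F] [MeasurableSpace F]

/-- `G` is an unbiased stochastic oracle for the vector field `g` under the sampling law `μ`, with
variance at most `σ ^ 2` and mean-squared smoothness constant `L`. Square integrability is a field
so that the Bochner integrals in the two bounds cannot be junk values. -/
structure IsMeanSqSmoothOracle (μ : Measure Ω) (G : E → Ω → F) (g : E → F) (σ : ℝ) (L : ℝ≥0) :
    Prop where
  measurable : Measurable (Function.uncurry G)
  memLp : ∀ x, MemLp (G x) 2 μ
  integral_eq : ∀ x, ∫ ξ, G x ξ ∂μ = g x
  variance_le : ∀ x, ∫ ξ, ‖G x ξ - g x‖ ^ 2 ∂μ ≤ σ ^ 2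
  meanSq_lipschitz : ∀ x y, ∫ ξ, ‖G x ξ - G y ξ‖ ^ 2 ∂μ ≤ L ^ 2 * ‖x - y‖ ^ 2

/-- Noise of one variance-reduced increment from `x` to `y`: the centred oracle at `y` minus
`1 - p` times the centred oracle at `x`, both evaluated on the same sample. -/
def mvrNoise (G : E → Ω → F) (g : E → F) (p : ℝ) (x y : E) (ξ : Ω) : F :=
  (G y ξ - g y) - (1 - p) • (G x ξ - g x)

namespace IsMeanSqSmoothOracle

variable {μ : Measure Ω} [IsProbabilityMeasure μ] {G : E → Ω → F} {g : E → F} {σ : ℝ} {L : ℝ≥0}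

theorem memLp_sub (h : IsMeanSqSmoothOracle μ G g σ L) (x : E) :
    MemLp (fun ξ => G x ξ - g x) 2 μ :=
  (h.memLp x).sub (memLp_const _)

theorem memLp_mvrNoise (h : IsMeanSqSmoothOracle μ G g σ L) (p : ℝ) (x y : E) :
    MemLp (mvrNoise G g p x y) 2 μ :=
  (h.memLp_sub y).sub ((h.memLp_sub x).const_smul (1 - p))

variable [CompleteSpace F]

theorem integral_sub_eq_zero (h : IsMeanSqSmoothOracle μ G g σ L) (x : E) :
    ∫ ξ, G x ξ - g x ∂μ = 0 := by
  rw [integral_sub ((h.memLp x).integrable one_le_two) (integrable_const _), h.integral_eq,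
    integral_const, probReal_univ, one_smul, sub_self]

theorem integral_mvrNoise_eq_zero (h : IsMeanSqSmoothOracle μ G g σ L) (p : ℝ) (x y : E) :
    ∫ ξ, mvrNoise G g p x y ξ ∂μ = 0 := by
  simp only [mvrNoise]
  rw [integral_sub ((h.memLp_sub y).integrable one_le_two)
    (((h.memLp_sub x).integrable one_le_two).fun_smul (1 - p)), integral_smul,
    h.integral_sub_eq_zero, h.integral_sub_eq_zero, smul_zero, sub_zero]

end IsMeanSqSmoothOracle

end Oracle

section OracleMoments

variable {Ω E F : Type*} [MeasurableSpace Ω] [NormedAddCommGroup E] [MeasurableSpace E]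
  [NormedAddCommGroup F] [InnerProductSpace ℝ F] [CompleteSpace F] [MeasurableSpace F]
  {μ : Measure Ω} [IsProbabilityMeasure μ] {G : E → Ω → F} {g : E → F} {σ : ℝ} {L : ℝ≥0}

namespace IsMeanSqSmoothOracle

theorem sq_norm_sub_add_integral_norm_sq_eq (h : IsMeanSqSmoothOracle μ G g σ L) (x y : E) :
    ‖g x - g y‖ ^ 2 + ∫ ξ, ‖(G x ξ - G y ξ) - (g x - g y)‖ ^ 2 ∂μ
      = ∫ ξ, ‖G x ξ - G y ξ‖ ^ 2 ∂μ := by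
  have hmean : ∫ ξ, G x ξ - G y ξ ∂μ = g x - g y := by
    rw [integral_sub ((h.memLp x).integrable one_le_two) ((h.memLp y).integrable one_le_two),
      h.integral_eq, h.integral_eq]
  have hbias := sq_norm_integral_add_integral_norm_sub_sq ((h.memLp x).sub (h.memLp y))
  simpa only [Pi.sub_apply, hmean] using hbias

theorem lipschitzWith (h : IsMeanSqSmoothOracle μ G g σ L) : LipschitzWith L g := by
  refine LipschitzWith.of_dist_le_mul fun x y => ?_
  rw [dist_eq_norm, dist_eq_norm]
  refine le_of_sq_le_sq ?_ (by positivity)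
  rw [mul_pow]
  exact (le_add_of_nonneg_right (integral_nonneg fun _ => sq_nonneg _)).trans
    ((h.sq_norm_sub_add_integral_norm_sq_eq x y).trans_le (h.meanSq_lipschitz x y))

theorem integral_norm_mvrNoise_sq_le (h : IsMeanSqSmoothOracle μ G g σ L) (p : ℝ) (x y : E) :
    ∫ ξ, ‖mvrNoise G g p x y ξ‖ ^ 2 ∂μ
      ≤ 2 * p ^ 2 * σ ^ 2 + 2 * (1 - p) ^ 2 * L ^ 2 * ‖y - x‖ ^ 2 := by
  let U : Ω → F := fun ξ => G y ξ - g y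
  let V : Ω → F := fun ξ => (G y ξ - G x ξ) - (g y - g x)
  have hU : Integrable (fun ξ => ‖U ξ‖ ^ 2) μ := (h.memLp_sub y).integrable_norm_pow two_ne_zero
  have hV : Integrable (fun ξ => ‖V ξ‖ ^ 2) μ :=
    (((h.memLp y).sub (h.memLp x)).sub (memLp_const _)).integrable_norm_pow two_ne_zero
  have hsplit : ∀ ξ, ‖mvrNoise G g p x y ξ‖ ^ 2
      ≤ 2 * p ^ 2 * ‖U ξ‖ ^ 2 + 2 * (1 - p) ^ 2 * ‖V ξ‖ ^ 2 := fun ξ => by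
    have hdecomp : mvrNoise G g p x y ξ = p • U ξ + (1 - p) • V ξ := by
      simp only [mvrNoise, U, V]; module
    calc ‖mvrNoise G g p x y ξ‖ ^ 2 ≤ (‖p • U ξ‖ + ‖(1 - p) • V ξ‖) ^ 2 := by
          rw [hdecomp]; gcongr; exact norm_add_le _ _
      _ ≤ 2 * (‖p • U ξ‖ ^ 2 + ‖(1 - p) • V ξ‖ ^ 2) := add_sq_le
      _ = 2 * p ^ 2 * ‖U ξ‖ ^ 2 + 2 * (1 - p) ^ 2 * ‖V ξ‖ ^ 2 := by
          simp only [norm_smul, mul_pow, Real.norm_eq_abs, sq_abs]; ring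
  have hV_le : ∫ ξ, ‖V ξ‖ ^ 2 ∂μ ≤ L ^ 2 * ‖y - x‖ ^ 2 :=
    (le_add_of_nonneg_left (sq_nonneg _)).trans
      ((h.sq_norm_sub_add_integral_norm_sq_eq y x).trans_le (h.meanSq_lipschitz y x))
  calc ∫ ξ, ‖mvrNoise G g p x y ξ‖ ^ 2 ∂μ
      ≤ ∫ ξ, 2 * p ^ 2 * ‖U ξ‖ ^ 2 + 2 * (1 - p) ^ 2 * ‖V ξ‖ ^ 2 ∂μ :=
        integral_mono ((h.memLp_mvrNoise p x y).integrable_norm_pow two_ne_zero)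
          ((hU.const_mul _).add (hV.const_mul _)) hsplit
    _ = 2 * p ^ 2 * ∫ ξ, ‖U ξ‖ ^ 2 ∂μ + 2 * (1 - p) ^ 2 * ∫ ξ, ‖V ξ‖ ^ 2 ∂μ := by
        rw [integral_add (hU.const_mul _) (hV.const_mul _), integral_const_mul, integral_const_mul]
    _ ≤ 2 * p ^ 2 * σ ^ 2 + 2 * (1 - p) ^ 2 * (L ^ 2 * ‖y - x‖ ^ 2) := by
        gcongr; exact h.variance_le y
    _ = _ := by ring

end IsMeanSqSmoothOracle

end OracleMoments

section Recursion

variable {Ω E : Type*} [NormedAddCommGroup E] [NormedSpace ℝ E]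

/-- One Rennala MVR update of the pair `s = (xᵏ, gᵏ)` with the minibatch `w`. -/
noncomputable def mvrStep {B : ℕ} (G : E → Ω → E) (γ p : ℝ) (s : E × E) (w : Fin B → Ω) : E × E :=
  (s.1 - γ • s.2, sampleMean (G (s.1 - γ • s.2)) w + (1 - p) • (s.2 - sampleMean (G s.1) w))

/-- The Rennala MVR trajectory `(xᵏ, gᵏ)` in an arbitrary space, extending `rennalaMVR`. -/
noncomputable def mvrState {B₀ B : ℕ} (G : E → Ω → E) (γ p : ℝ) (x0 : E) (ζ : Fin B₀ → Ω)
    (ξ : ℕ → Fin B → Ω) : ℕ → E × E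
  | 0 => (x0, sampleMean (G x0) ζ)
  | k + 1 => mvrStep G γ p (mvrState G γ p x0 ζ ξ k) (ξ k)

/-- Error of `s.2` as an estimator of the field `g` at the iterate `s.1`. -/
def estimatorError (g : E → E) (s : E × E) : E :=
  s.2 - g s.1

theorem rennalaMVR_eq_mvrState {d : ℕ}
    (G : EuclideanSpace ℝ (Fin d) → Ω → EuclideanSpace ℝ (Fin d)) (γ p : ℝ) (B₀ B : ℕ)
    (x0 : EuclideanSpace ℝ (Fin d)) (ζ : Fin B₀ → Ω) (ξ : ℕ → Fin B → Ω) :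
    ∀ k, rennalaMVR G γ p B₀ B x0 ζ ξ k = mvrState G γ p x0 ζ ξ k
  | 0 => rfl
  | k + 1 => by
    simp only [rennalaMVR, mvrState, mvrStep, sampleMean,
      rennalaMVR_eq_mvrState G γ p B₀ B x0 ζ ξ k]

theorem estimatorError_mvrStep {B : ℕ} (hB : 0 < B) (G : E → Ω → E) (g : E → E) (γ p : ℝ)
    (s : E × E) (w : Fin B → Ω) :
    estimatorError g (mvrStep G γ p s w) = (1 - p) • estimatorError g s
      + sampleMean (mvrNoise G g p s.1 (s.1 - γ • s.2)) w := by
  have hnoise : sampleMean (mvrNoise G g p s.1 (s.1 - γ • s.2)) w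
      = (sampleMean (G (s.1 - γ • s.2)) w - g (s.1 - γ • s.2))
        - (1 - p) • (sampleMean (G s.1) w - g s.1) := by
    unfold mvrNoise
    rw [sampleMean_sub, sampleMean_smul, sampleMean_sub, sampleMean_sub, sampleMean_const hB,
      sampleMean_const hB]
  rw [hnoise]
  simp only [estimatorError, mvrStep]
  module

end Recursion

section Measurability

variable {Ω E : Type*} [MeasurableSpace Ω] [NormedAddCommGroup E] [NormedSpace ℝ E]
  [MeasurableSpace E] [BorelSpace E] [SecondCountableTopology E] {G : E → Ω → E} {B₀ B : ℕ}

theorem measurable_sampleMean_uncurry (hG : Measurable (Function.uncurry G)) :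
    Measurable fun q : E × (Fin B → Ω) => sampleMean (G q.1) q.2 := by
  have hterm : ∀ j, Measurable fun q : E × (Fin B → Ω) => G q.1 (q.2 j) := fun j =>
    hG.comp (by fun_prop : Measurable fun q : E × (Fin B → Ω) => (q.1, q.2 j))
  exact (Finset.measurable_fun_sum _ fun j _ => hterm j).const_smul _

theorem measurable_mvrStep (hG : Measurable (Function.uncurry G)) (γ p : ℝ) :
    Measurable fun q : (E × E) × (Fin B → Ω) => mvrStep G γ p q.1 q.2 := by
  have hnext : Measurable fun q : (E × E) × (Fin B → Ω) =>
      sampleMean (G (q.1.1 - γ • q.1.2)) q.2 :=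
    (measurable_sampleMean_uncurry hG).comp
      (by fun_prop : Measurable fun q : (E × E) × (Fin B → Ω) => (q.1.1 - γ • q.1.2, q.2))
  have hcurr : Measurable fun q : (E × E) × (Fin B → Ω) => sampleMean (G q.1.1) q.2 :=
    (measurable_sampleMean_uncurry hG).comp
      (by fun_prop : Measurable fun q : (E × E) × (Fin B → Ω) => (q.1.1, q.2))
  unfold mvrStep
  fun_prop

theorem exists_measurable_mvrState_eq (hG : Measurable (Function.uncurry G)) (γ p : ℝ) (x0 : E)
    (k : ℕ) : ∃ F : (Fin B₀ → Ω) × (Fin k → Fin B → Ω) → E × E, Measurable F ∧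
      ∀ z w, mvrState G γ p x0 z w k = F (z, fun i => w i) := by
  induction k with
  | zero =>
    refine ⟨fun q => (x0, sampleMean (G x0) q.1), ?_, fun _ _ => rfl⟩
    exact measurable_const.prodMk ((measurable_sampleMean_uncurry hG).comp
      (measurable_const.prodMk measurable_fst))
  | succ k ih =>
    obtain ⟨F, hF, hFeq⟩ := ih
    refine ⟨fun q => mvrStep G γ p (F (q.1, fun i => q.2 i.castSucc)) (q.2 (Fin.last k)), ?_,
      fun z w => by simp only [mvrState, hFeq, Fin.val_castSucc, Fin.val_last]⟩
    exact (measurable_mvrStep hG γ p).comp ((hF.comp (by fun_prop)).prodMk (by fun_prop))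

end Measurability

section ExpectedStep

variable {Ω E : Type*} [MeasurableSpace Ω] [NormedAddCommGroup E]
  {G : E → Ω → E} {g : E → E} {L : ℝ≥0} {B : ℕ} {S : Type*} [MeasurableSpace S] {P : Measure S}
  {Y : S → E × E}

theorem memLp_comp_of_lipschitzWith [IsFiniteMeasure P] {F : Type*} [NormedAddCommGroup F]
    {φ : E → F} {X : S → E} {q : ENNReal} (hφ : LipschitzWith L φ) (hX : MemLp X q P) :
    MemLp (fun s => φ (X s)) q P := by
  have hcentred : MemLp ((fun x => φ x - φ 0) ∘ X) q P :=
    LipschitzWith.comp_memLp (K := L) (.of_dist_le_mul fun x y => by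
      simpa only [dist_sub_right] using hφ.dist_le_mul x y) (sub_self _) hX
  simpa only [Pi.add_def, Function.comp_apply, sub_add_cancel] using
    hcentred.add (memLp_const (φ 0))

theorem memLp_estimatorError [IsFiniteMeasure P] (hg : LipschitzWith L g) {q : ENNReal}
    (hY : MemLp Y q P) : MemLp (fun s => estimatorError g (Y s)) q P :=
  hY.snd.sub (memLp_comp_of_lipschitzWith hg hY.fst)

variable [InnerProductSpace ℝ E] [MeasurableSpace E] [BorelSpace E] [SecondCountableTopology E]

namespace IsMeanSqSmoothOracle

variable [CompleteSpace E] {μ : Measure Ω} [IsProbabilityMeasure μ] {σ : ℝ} {W : S → Fin B → Ω}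

theorem integrable_and_integral_norm_estimatorError_sq_le (h : IsMeanSqSmoothOracle μ G g σ L)
    (hB : 0 < B) (γ p : ℝ) (s : E × E) :
    Integrable (fun w : Fin B → Ω => ‖estimatorError g (mvrStep G γ p s w)‖ ^ 2)
        (Measure.pi fun _ => μ) ∧
      ∫ w : Fin B → Ω, ‖estimatorError g (mvrStep G γ p s w)‖ ^ 2 ∂(Measure.pi fun _ => μ)
        ≤ (1 - p) ^ 2 * ‖estimatorError g s‖ ^ 2
          + (2 * p ^ 2 * σ ^ 2 + 2 * (1 - p) ^ 2 * L ^ 2 * ‖γ • s.2‖ ^ 2) / B := by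
  have hnoise_sq := h.integral_norm_mvrNoise_sq_le p s.1 (s.1 - γ • s.2)
  rw [sub_sub_cancel_left, norm_neg] at hnoise_sq
  have hnoise : MemLp (mvrNoise G g p s.1 (s.1 - γ • s.2)) 2 μ := h.memLp_mvrNoise _ _ _
  simp only [estimatorError_mvrStep hB]
  refine ⟨((memLp_const ((1 - p) • estimatorError g s)).add
    (memLp_sampleMean (n := B) hnoise)).integrable_norm_pow two_ne_zero, ?_⟩
  rw [integral_norm_const_add_sampleMean_sq hnoise (h.integral_mvrNoise_eq_zero _ _ _), norm_smul,
    mul_pow, Real.norm_eq_abs, sq_abs]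
  gcongr

variable [IsProbabilityMeasure P]

theorem memLp_and_integral_norm_estimatorError_sq_le (h : IsMeanSqSmoothOracle μ G g σ L)
    (hB : 0 < B) (hY : MemLp Y 2 P) (hW : HasLaw W (Measure.pi fun _ => μ) P)
    (hYW : Y ⟂ᵢ[P] W) (γ p : ℝ) :
    MemLp (fun s => estimatorError g (mvrStep G γ p (Y s) (W s))) 2 P ∧
      ∫ s, ‖estimatorError g (mvrStep G γ p (Y s) (W s))‖ ^ 2 ∂P
        ≤ (1 - p) ^ 2 * ∫ s, ‖estimatorError g (Y s)‖ ^ 2 ∂P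
          + (2 * p ^ 2 * σ ^ 2 + 2 * (1 - p) ^ 2 * L ^ 2 * ∫ s, ‖γ • (Y s).2‖ ^ 2 ∂P) / B := by
  have hg : Measurable g := h.lipschitzWith.continuous.measurable
  have herr : Measurable (estimatorError g) := by unfold estimatorError; fun_prop
  have hstep := herr.comp (measurable_mvrStep (B := B) h.measurable γ p)
  have hYm : AEMeasurable Y P := hY.aestronglyMeasurable.aemeasurable
  have hYerr : Integrable (fun s => ‖estimatorError g (Y s)‖ ^ 2) P :=
    (memLp_estimatorError h.lipschitzWith hY).integrable_norm_pow two_ne_zero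
  have hYmove : Integrable (fun s => ‖γ • (Y s).2‖ ^ 2) P :=
    (hY.snd.const_smul γ).integrable_norm_pow two_ne_zero
  have hYnoise : Integrable (fun s =>
      2 * p ^ 2 * σ ^ 2 + 2 * (1 - p) ^ 2 * L ^ 2 * ‖γ • (Y s).2‖ ^ 2) P :=
    (integrable_const _).add (hYmove.const_mul _)
  obtain ⟨hint, hle⟩ := integrable_and_integral_le_of_indepFun hYW hYm hW (hstep.norm.pow_const 2)
    (fun _ => sq_nonneg _)
    (b := fun a => (1 - p) ^ 2 * ‖estimatorError g a‖ ^ 2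
      + (2 * p ^ 2 * σ ^ 2 + 2 * (1 - p) ^ 2 * L ^ 2 * ‖γ • a.2‖ ^ 2) / B)
    (by fun_prop) ((hYerr.const_mul _).add (hYnoise.div_const _))
    (fun a => (h.integrable_and_integral_norm_estimatorError_sq_le hB γ p a).1)
    (fun a => (h.integrable_and_integral_norm_estimatorError_sq_le hB γ p a).2)
  refine ⟨(memLp_two_iff_integrable_sq_norm
    (hstep.comp_aemeasurable (hYm.prodMk hW.aemeasurable)).aestronglyMeasurable).2 hint, ?_⟩
  rwa [integral_add (hYerr.const_mul _) (hYnoise.div_const _), integral_const_mul, integral_div,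
    integral_add (integrable_const _) (hYmove.const_mul _), integral_const, probReal_univ, one_smul,
    integral_const_mul] at hle

theorem memLp_mvrStep (h : IsMeanSqSmoothOracle μ G g σ L) (hB : 0 < B)
    (hY : MemLp Y 2 P) (hW : HasLaw W (Measure.pi fun _ => μ) P) (hYW : Y ⟂ᵢ[P] W) (γ p : ℝ) :
    MemLp (fun s => mvrStep G γ p (Y s) (W s)) 2 P := by
  have hnext : MemLp (fun s => (mvrStep G γ p (Y s) (W s)).1) 2 P :=
    hY.fst.sub (hY.snd.const_smul γ)
  have herr := (h.memLp_and_integral_norm_estimatorError_sq_le hB hY hW hYW γ p).1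
  refine memLp_prod_iff.2 ⟨hnext, ?_⟩
  simpa only [estimatorError, Pi.add_def, sub_add_cancel] using
    herr.add (memLp_comp_of_lipschitzWith h.lipschitzWith hnext)

end IsMeanSqSmoothOracle

end ExpectedStep

section ExpectedDescent

variable {E : Type*} [NormedAddCommGroup E] [InnerProductSpace ℝ E] [CompleteSpace E]
  {S : Type*} [MeasurableSpace S] {P : Measure S} [IsFiniteMeasure P]
  {f : E → ℝ} {L : ℝ≥0}

theorem integrable_comp_of_lipschitzWith_gradient (hf : Differentiable ℝ f)
    (hL : LipschitzWith L (gradient f)) {fstar : ℝ} (hfstar : ∀ x, fstar ≤ f x) {X : S → E}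
    (hX : MemLp X 2 P) : Integrable (fun s => f (X s)) P := by
  have hupper : ∀ s, f (X s) ≤ f 0 + ⟪gradient f 0, X s⟫_ℝ + L / 2 * ‖X s‖ ^ 2 := fun s => by
    simpa only [zero_add] using apply_add_le_of_lipschitzWith_gradient hf hL 0 (X s)
  exact integrable_of_le_of_le (hf.continuous.comp_aestronglyMeasurable hX.aestronglyMeasurable)
    (.of_forall fun s => hfstar (X s)) (.of_forall hupper) (integrable_const fstar)
    (((integrable_const _).add ((hX.integrable one_le_two).const_inner _)).add
      ((hX.integrable_norm_pow two_ne_zero).const_mul _))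

theorem integral_inexact_gradient_step_le (hf : Differentiable ℝ f)
    (hL : LipschitzWith L (gradient f)) {fstar : ℝ} (hfstar : ∀ x, fstar ≤ f x) {γ : ℝ}
    (hγ : γ ≠ 0) {Y : S → E × E} (hY : MemLp Y 2 P) :
    ∫ s, f ((Y s).1 - γ • (Y s).2) ∂P + γ / 2 * ∫ s, ‖gradient f (Y s).1‖ ^ 2 ∂P
        + (1 / (2 * γ) - L / 2) * ∫ s, ‖γ • (Y s).2‖ ^ 2 ∂P
      ≤ ∫ s, f (Y s).1 ∂P + γ / 2 * ∫ s, ‖estimatorError (gradient f) (Y s)‖ ^ 2 ∂P := by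
  have hnext : Integrable (fun s => f ((Y s).1 - γ • (Y s).2)) P :=
    integrable_comp_of_lipschitzWith_gradient hf hL hfstar (hY.fst.sub (hY.snd.const_smul γ))
  have hcurr : Integrable (fun s => f (Y s).1) P :=
    integrable_comp_of_lipschitzWith_gradient hf hL hfstar hY.fst
  have hgrad : Integrable (fun s => γ / 2 * ‖gradient f (Y s).1‖ ^ 2) P :=
    ((memLp_comp_of_lipschitzWith hL hY.fst).integrable_norm_pow two_ne_zero).const_mul _
  have hmove : Integrable (fun s => (1 / (2 * γ) - L / 2) * ‖γ • (Y s).2‖ ^ 2) P :=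
    ((hY.snd.const_smul γ).integrable_norm_pow two_ne_zero).const_mul _
  have herr : Integrable (fun s => γ / 2 * ‖estimatorError (gradient f) (Y s)‖ ^ 2) P :=
    ((memLp_estimatorError hL hY).integrable_norm_pow two_ne_zero).const_mul _
  have hleft : Integrable (fun s =>
      f ((Y s).1 - γ • (Y s).2) + γ / 2 * ‖gradient f (Y s).1‖ ^ 2) P := hnext.add hgrad
  have hmono := integral_mono (hleft.add hmove) (hcurr.add herr) fun s =>
    inexact_gradient_step_le hf hL hγ (Y s).1 (Y s).2
  simp only [Pi.add_apply] at hmono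
  rwa [integral_add hleft hmove, integral_add hnext hgrad, integral_add hcurr herr,
    integral_const_mul, integral_const_mul, integral_const_mul] at hmono

end ExpectedDescent

section Lyapunov

theorem sum_add_lyapunov_le {φ N V D : ℕ → ℝ} {γ p c R T : ℝ} (hγ : 0 ≤ γ) (hp : 0 < p) {K : ℕ}
    (hD : ∀ k < K, 0 ≤ D k) (hT : γ / 2 * T ≤ c)
    (hφ : ∀ k < K, φ (k + 1) + γ / 2 * N k + c * D k ≤ φ k + γ / 2 * V k)
    (hV : ∀ k < K, V (k + 1) ≤ (1 - p) * V k + p * (R + T * D k)) :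
    γ / 2 * ∑ k ∈ Finset.range K, N k + (φ K + γ / (2 * p) * V K)
      ≤ φ 0 + γ / (2 * p) * V 0 + K * (γ / 2 * R) := by
  have hstep : ∀ k < K, γ / 2 * N k ≤ (φ k + γ / (2 * p) * V k)
      - (φ (k + 1) + γ / (2 * p) * V (k + 1)) + γ / 2 * R := fun k hk => by
    have hscaled : γ / (2 * p) * V (k + 1)
        ≤ γ / (2 * p) * V k - γ / 2 * V k + γ / 2 * R + γ / 2 * T * D k := by
      calc γ / (2 * p) * V (k + 1) ≤ γ / (2 * p) * ((1 - p) * V k + p * (R + T * D k)) := by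
            gcongr; exact hV k hk
        _ = _ := by field_simp; ring
    linarith [hφ k hk, mul_le_mul_of_nonneg_right hT (hD k hk)]
  have hsum := Finset.sum_le_sum fun k hk => hstep k (Finset.mem_range.1 hk)
  rw [Finset.sum_add_distrib, Finset.sum_range_sub', Finset.sum_const, Finset.card_range,
    nsmul_eq_mul, ← Finset.mul_sum] at hsum
  linarith

theorem movement_coeff_le_of_stepsize {γ L a : ℝ} (hγ : 0 < γ) (hL : 0 ≤ L) (ha : 0 ≤ a)
    (h : 2 * γ * L * (1 + a) ≤ 1) : γ / 2 * (2 * L ^ 2 * a ^ 2) ≤ 1 / (2 * γ) - L / 2 := by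
  have hγL : 0 ≤ γ * L := by positivity
  have hγLa : 0 ≤ γ * L * a := by positivity
  have hkey : 2 * (γ * L * a) ^ 2 + γ * L ≤ 1 := by nlinarith
  have hgap : 1 / (2 * γ) - L / 2 - γ / 2 * (2 * L ^ 2 * a ^ 2)
      = (1 - (2 * (γ * L * a) ^ 2 + γ * L)) / (2 * γ) := by
    field_simp; ring
  have hnonneg : 0 ≤ (1 - (2 * (γ * L * a) ^ 2 + γ * L)) / (2 * γ) :=
    div_nonneg (by linarith) (by positivity)
  linarith

end Lyapunov

section Trajectory

variable {Ω E S : Type*} [MeasurableSpace Ω] [MeasurableSpace S] {B₀ B K : ℕ}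

/-- Under `P`, the initial minibatch `ζ` and the first `K` minibatches `ξ 0, …, ξ (K - 1)` consist
of i.i.d. samples from `μ`. Joint independence is expressed sequentially: each minibatch is
independent of everything drawn before it. -/
structure IsMinibatchSampling (μ : Measure Ω) (P : Measure S) (K : ℕ) (ζ : S → Fin B₀ → Ω)
    (ξ : ℕ → S → Fin B → Ω) : Prop where
  hasLaw_init : HasLaw ζ (Measure.pi fun _ => μ) P
  hasLaw_batch : ∀ k < K, HasLaw (ξ k) (Measure.pi fun _ => μ) P
  indepFun_past : ∀ k < K, (fun s => (ζ s, fun i : Fin k => ξ i s)) ⟂ᵢ[P] ξ k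

variable [NormedAddCommGroup E] [InnerProductSpace ℝ E] [MeasurableSpace E] [BorelSpace E]
  [SecondCountableTopology E] {G : E → Ω → E} {g : E → E} {σ γ p : ℝ} {L : ℝ≥0}
  {x0 : E} {μ : Measure Ω} {P : Measure S} {ζ : S → Fin B₀ → Ω} {ξ : ℕ → S → Fin B → Ω}

namespace IsMinibatchSampling

theorem indepFun_mvrState (hs : IsMinibatchSampling μ P K ζ ξ)
    (hG : Measurable (Function.uncurry G)) (γ p : ℝ) (x0 : E) {k : ℕ} (hk : k < K) :
    (fun s => mvrState G γ p x0 (ζ s) (fun i => ξ i s) k) ⟂ᵢ[P] ξ k := by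
  obtain ⟨F, hF, hFeq⟩ := exists_measurable_mvrState_eq (B₀ := B₀) (B := B) hG γ p x0 k
  simp only [hFeq]
  exact (hs.indepFun_past k hk).comp hF measurable_id

variable [CompleteSpace E] [IsProbabilityMeasure μ]

theorem integral_norm_estimatorError_zero_sq_le (hs : IsMinibatchSampling μ P K ζ ξ)
    (hG : IsMeanSqSmoothOracle μ G g σ L) (hB₀ : 0 < B₀) (γ p : ℝ) (x0 : E) :
    ∫ s, ‖estimatorError g (mvrState G γ p x0 (ζ s) (fun i => ξ i s) 0)‖ ^ 2 ∂P ≤ σ ^ 2 / B₀ := by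
  have hcentred : ∀ z : Fin B₀ → Ω, sampleMean (fun η => G x0 η - g x0) z
      = sampleMean (G x0) z - g x0 := fun z => by rw [sampleMean_sub, sampleMean_const hB₀]
  have hmemLp := memLp_sampleMean (n := B₀) (hG.memLp_sub x0)
  calc ∫ s, ‖estimatorError g (mvrState G γ p x0 (ζ s) (fun i => ξ i s) 0)‖ ^ 2 ∂P
      = ∫ s, ‖sampleMean (fun η => G x0 η - g x0) (ζ s)‖ ^ 2 ∂P := by
        simp only [estimatorError, mvrState, hcentred]
    _ = ∫ z, ‖sampleMean (fun η => G x0 η - g x0) z‖ ^ 2 ∂(Measure.pi fun _ => μ) :=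
        hs.hasLaw_init.integral_comp
          (hmemLp.integrable_norm_pow two_ne_zero).aestronglyMeasurable
    _ = (∫ η, ‖G x0 η - g x0‖ ^ 2 ∂μ) / B₀ :=
        integral_norm_sampleMean_sq (hG.memLp_sub x0) (hG.integral_sub_eq_zero x0)
    _ ≤ σ ^ 2 / B₀ := by gcongr; exact hG.variance_le x0

variable [IsProbabilityMeasure P]

theorem memLp_mvrState (hs : IsMinibatchSampling μ P K ζ ξ)
    (hG : IsMeanSqSmoothOracle μ G g σ L) (hB : 0 < B) (γ p : ℝ) (x0 : E) {k : ℕ} (hk : k ≤ K) :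
    MemLp (fun s => mvrState G γ p x0 (ζ s) (fun i => ξ i s) k) 2 P := by
  induction k with
  | zero =>
    have hmean : MemLp (sampleMean (n := B₀) (G x0)) 2 (P.map ζ) := by
      rw [hs.hasLaw_init.map_eq]; exact memLp_sampleMean (hG.memLp x0)
    exact memLp_prod_iff.2 ⟨memLp_const x0, hmean.comp_of_map hs.hasLaw_init.aemeasurable⟩
  | succ k ih =>
    exact hG.memLp_mvrStep hB (ih (by omega)) (hs.hasLaw_batch k hk)
      (hs.indepFun_mvrState hG.measurable γ p x0 hk) γ p

end IsMinibatchSampling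

end Trajectory

section Bound

variable {Ω E S : Type*} [MeasurableSpace Ω] [MeasurableSpace S] [NormedAddCommGroup E]
  [InnerProductSpace ℝ E] [CompleteSpace E] [MeasurableSpace E] [BorelSpace E]
  [SecondCountableTopology E] {B₀ B K : ℕ} {μ : Measure Ω} [IsProbabilityMeasure μ] {P : Measure S}
  [IsProbabilityMeasure P] {ζ : S → Fin B₀ → Ω} {ξ : ℕ → S → Fin B → Ω} {G : E → Ω → E}
  {σ γ p : ℝ} {L : ℝ≥0}

theorem IsMinibatchSampling.integral_norm_estimatorError_succ_sq_le
    (hs : IsMinibatchSampling μ P K ζ ξ) {g : E → E} (hG : IsMeanSqSmoothOracle μ G g σ L)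
    (hB : 0 < B) (hp : p ∈ Set.Ioc (0 : ℝ) 1) (γ : ℝ) (x0 : E) {k : ℕ} (hk : k < K) :
    ∫ s, ‖estimatorError g (mvrState G γ p x0 (ζ s) (fun i => ξ i s) (k + 1))‖ ^ 2 ∂P
      ≤ (1 - p) * ∫ s, ‖estimatorError g (mvrState G γ p x0 (ζ s) (fun i => ξ i s) k)‖ ^ 2 ∂P
        + p * (2 * p * σ ^ 2 / B + 2 * L ^ 2 * ((1 - p) / √(p * B)) ^ 2
          * ∫ s, ‖γ • (mvrState G γ p x0 (ζ s) (fun i => ξ i s) k).2‖ ^ 2 ∂P) := by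
  obtain ⟨hp0, hp1⟩ := hp
  have hstep := (hG.memLp_and_integral_norm_estimatorError_sq_le hB
    (hs.memLp_mvrState hG hB γ p x0 hk.le) (hs.hasLaw_batch k hk)
    (hs.indepFun_mvrState hG.measurable γ p x0 hk) γ p).2
  have hcontract : (1 - p) ^ 2 ≤ 1 - p := pow_le_of_le_one (by linarith) (by linarith) two_ne_zero
  rw [div_pow, Real.sq_sqrt (by positivity)]
  calc ∫ s, ‖estimatorError g (mvrState G γ p x0 (ζ s) (fun i => ξ i s) (k + 1))‖ ^ 2 ∂P
      ≤ _ := hstep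
    _ ≤ (1 - p) * ∫ s, ‖estimatorError g (mvrState G γ p x0 (ζ s) (fun i => ξ i s) k)‖ ^ 2 ∂P
        + (2 * p ^ 2 * σ ^ 2 + 2 * (1 - p) ^ 2 * L ^ 2
          * ∫ s, ‖γ • (mvrState G γ p x0 (ζ s) (fun i => ξ i s) k).2‖ ^ 2 ∂P) / B := by
        gcongr
    _ = _ := by field_simp

theorem rennalaMVR_iteration_bound_general (hs : IsMinibatchSampling μ P K ζ ξ) {f : E → ℝ}
    (hf : Differentiable ℝ f) {fstar : ℝ} (hfstar : ∀ x, fstar ≤ f x)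
    (hG : IsMeanSqSmoothOracle μ G (gradient f) σ L) (hB₀ : 0 < B₀) (hB : 0 < B)
    (hp : p ∈ Set.Ioc (0 : ℝ) 1) (hγ : 0 < γ) (hstep : 2 * γ * L * (1 + (1 - p) / √(p * B)) ≤ 1)
    (hK : 0 < K) (x0 : E) :
    (1 / K : ℝ) * ∑ k ∈ Finset.range K,
        ∫ s, ‖gradient f (mvrState G γ p x0 (ζ s) (fun i => ξ i s) k).1‖ ^ 2 ∂P
      ≤ 2 * (f x0 - fstar) / (γ * K) + 2 * p * σ ^ 2 / B + 1 / (p * K) * (σ ^ 2 / B₀) := by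
  let Y : ℕ → S → E × E := fun k s => mvrState G γ p x0 (ζ s) (fun i => ξ i s) k
  have hY : ∀ k ≤ K, MemLp (Y k) 2 P := fun k hk => hs.memLp_mvrState hG hB γ p x0 hk
  have hp0 : 0 < p := hp.1
  have ha : 0 ≤ (1 - p) / √(p * B) := div_nonneg (sub_nonneg.2 hp.2) (Real.sqrt_nonneg _)
  have hlyapunov := sum_add_lyapunov_le (φ := fun k => ∫ s, f (Y k s).1 ∂P)
    (V := fun k => ∫ s, ‖estimatorError (gradient f) (Y k s)‖ ^ 2 ∂P) hγ.le hp0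
    (fun k _ => integral_nonneg fun _ => sq_nonneg _)
    (movement_coeff_le_of_stepsize hγ L.2 ha hstep)
    (fun k hk => integral_inexact_gradient_step_le hf hG.lipschitzWith hfstar hγ.ne' (hY k hk.le))
    (fun k hk => hs.integral_norm_estimatorError_succ_sq_le hG hB hp γ x0 hk)
  have hφ0 : ∫ s, f (Y 0 s).1 ∂P = f x0 := by simp [Y, mvrState]
  have hV0 : ∫ s, ‖estimatorError (gradient f) (Y 0 s)‖ ^ 2 ∂P ≤ σ ^ 2 / B₀ :=
    hs.integral_norm_estimatorError_zero_sq_le hG hB₀ γ p x0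
  have hφK : fstar ≤ ∫ s, f (Y K s).1 ∂P := by
    simpa using integral_mono (integrable_const fstar) (integrable_comp_of_lipschitzWith_gradient
      hf hG.lipschitzWith hfstar (hY K le_rfl).fst) fun s => hfstar _
  have hVK : 0 ≤ γ / (2 * p) * ∫ s, ‖estimatorError (gradient f) (Y K s)‖ ^ 2 ∂P := by positivity
  have hV0_scaled := mul_le_mul_of_nonneg_left hV0 (by positivity : 0 ≤ γ / (2 * p))
  rw [hφ0] at hlyapunov
  calc _ = 2 / (γ * K) * (γ / 2 * ∑ k ∈ Finset.range K, ∫ s, ‖gradient f (Y k s).1‖ ^ 2 ∂P) := by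
        field_simp; rfl
    _ ≤ 2 / (γ * K) * (f x0 - fstar + γ / (2 * p) * (σ ^ 2 / B₀)
          + K * (γ / 2 * (2 * p * σ ^ 2 / B))) := by
        gcongr; linarith
    _ = _ := by field_simp; ring

end Bound

section ProductSampling

theorem indepFun_prodMk_fst {A X U V : Type*} [MeasurableSpace A] [MeasurableSpace X]
    [MeasurableSpace U] [MeasurableSpace V] {P : Measure A} {Q : Measure X}
    [IsProbabilityMeasure P] [IsProbabilityMeasure Q] {u : X → U} {v : X → V} (hu : Measurable u)
    (hv : Measurable v) (huv : u ⟂ᵢ[Q] v) :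
    (fun q : A × X => (q.1, u q.2)) ⟂ᵢ[P.prod Q] fun q => v q.2 := by
  have : IsProbabilityMeasure (Q.map u) := Measure.isProbabilityMeasure_map hu.aemeasurable
  have : IsProbabilityMeasure (Q.map v) := Measure.isProbabilityMeasure_map hv.aemeasurable
  have huv_law : MeasurePreserving (fun x => (u x, v x)) Q ((Q.map u).prod (Q.map v)) :=
    ⟨hu.prodMk hv, huv.map_prod_eq_prod_map_map hu.aemeasurable hv.aemeasurable⟩
  have hleft : HasLaw (fun q : A × X => (q.1, u q.2)) (P.prod (Q.map u)) (P.prod Q) :=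
    ((MeasurePreserving.id P).prod (hu.measurePreserving Q)).hasLaw
  have hright : HasLaw (fun q : A × X => v q.2) (Q.map v) (P.prod Q) :=
    ((hv.measurePreserving Q).comp measurePreserving_snd).hasLaw
  exact (indepFun_iff_hasLaw_prodMk_prod hleft hright).2
    ((measurePreserving_prodAssoc P _ _).symm.comp ((MeasurePreserving.id P).prod huv_law)).hasLaw

theorem isMinibatchSampling_prod {Ω : Type*} [MeasurableSpace Ω] (μ : Measure Ω)
    [IsProbabilityMeasure μ] (B₀ B : ℕ) {K : ℕ} (hK : 0 < K) :
    IsMinibatchSampling μ ((Measure.pi fun _ => μ).prod (Measure.pi fun _ => Measure.pi fun _ => μ))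
      K (fun ω : (Fin B₀ → Ω) × (Fin K → Fin B → Ω) => ω.1)
      (fun k ω => ω.2 ⟨k % K, Nat.mod_lt _ hK⟩) where
  hasLaw_init := measurePreserving_fst.hasLaw
  hasLaw_batch k _ := ((measurePreserving_eval
    (fun _ : Fin K => Measure.pi fun _ : Fin B => μ) ⟨k % K, Nat.mod_lt _ hK⟩).comp
      measurePreserving_snd).hasLaw
  indepFun_past k hk := by
    let Q : Measure (Fin K → Fin B → Ω) := Measure.pi fun _ => Measure.pi fun _ => μ
    have hcoord : iIndepFun (fun (i : Fin K) (w : Fin K → Fin B → Ω) => w i) Q :=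
      iIndepFun_pi (X := fun _ x => x) fun _ => aemeasurable_id
    have hdisj : Disjoint (Finset.Iio ⟨k, hk⟩) ({⟨k, hk⟩} : Finset (Fin K)) := by simp
    have hpast : (fun (w : Fin K → Fin B → Ω) (i : Fin k) => w (i.castLE hk.le)) ⟂ᵢ[Q]
        fun w => w ⟨k, hk⟩ :=
      (hcoord.indepFun_finset _ _ hdisj fun i => measurable_pi_apply i).comp
        (φ := fun (w : {j // j ∈ Finset.Iio (⟨k, hk⟩ : Fin K)} → Fin B → Ω) (i : Fin k) =>
          w ⟨i.castLE hk.le, Finset.mem_Iio.2 i.2⟩)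
        (ψ := fun w : {j // j ∈ ({⟨k, hk⟩} : Finset (Fin K))} → Fin B → Ω =>
          w ⟨⟨k, hk⟩, Finset.mem_singleton_self _⟩) (by fun_prop) (by fun_prop)
    have hmod : ∀ i : Fin k, (i : ℕ) % K = i := fun i => Nat.mod_eq_of_lt (i.2.trans hk)
    simp only [hmod, Nat.mod_eq_of_lt hk]
    exact indepFun_prodMk_fst (by fun_prop) (by fun_prop) hpast

end ProductSampling

/-- Iteration-complexity bound for Rennala MVR: under unbiasedness,
bounded variance `σ²` and mean-squared smoothness `L̄`, if
`γ ≤ 1/(2L̄(1 + (1−p)/√(pB)))` then for every `K ≥ 1`,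
`(1/K)∑_{k<K} E‖∇f(xᵏ)‖² ≤ 2Δ/(γK) + 2pσ²/B + 2σ²/(pKB₀)` with `Δ = f(x⁰) − f*`.
(The expectation is over the i.i.d. product of the initialization samples and the
per-iteration minibatch samples; only the samples `ξ⁰, …, ξ^{K−1}` influence
`x⁰, …, x^{K−1}`, and they are supplied via a `Fin K`-indexed product.) -/
theorem rennalaMVR_iteration_bound
    (d : ℕ) (hd : 1 ≤ d) {Ω : Type*} [MeasurableSpace Ω]
    (μ : Measure Ω) [IsProbabilityMeasure μ]
    (f : EuclideanSpace ℝ (Fin d) → ℝ) (hf : Differentiable ℝ f)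
    (fstar : ℝ) (hfstar : ∀ x, fstar ≤ f x)
    (G : EuclideanSpace ℝ (Fin d) → Ω → EuclideanSpace ℝ (Fin d))
    (hGmeas : Measurable fun q : (EuclideanSpace ℝ (Fin d)) × Ω => G q.1 q.2)
    (hGint : ∀ x, Integrable (G x) μ)
    (hUnbiased : ∀ x, (∫ ξ, G x ξ ∂μ) = gradient f x)
    (σ : ℝ) (hσ : 0 ≤ σ)
    (hVarInt : ∀ x, Integrable (fun ξ => ‖G x ξ - gradient f x‖ ^ 2) μ)
    (hVar : ∀ x, (∫ ξ, ‖G x ξ - gradient f x‖ ^ 2 ∂μ) ≤ σ ^ 2)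
    (Lbar : ℝ) (hLbar : 0 < Lbar)
    (hMSint : ∀ x y, Integrable (fun ξ => ‖G x ξ - G y ξ‖ ^ 2) μ)
    (hMS : ∀ x y, (∫ ξ, ‖G x ξ - G y ξ‖ ^ 2 ∂μ) ≤ Lbar ^ 2 * ‖x - y‖ ^ 2)
    (B₀ B : ℕ) (hB₀ : 1 ≤ B₀) (hB : 1 ≤ B)
    (p : ℝ) (hp : p ∈ Set.Ioc (0 : ℝ) 1)
    (γ : ℝ) (hγpos : 0 < γ)
    (hγ : γ ≤ 1 / (2 * Lbar * (1 + (1 - p) / Real.sqrt (p * B))))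
    (x0 : EuclideanSpace ℝ (Fin d)) :
    ∀ (K : ℕ) (hK : 1 ≤ K),
      (1 / K : ℝ) * ∑ k ∈ Finset.range K,
          ∫ ω : (Fin B₀ → Ω) × (Fin K → Fin B → Ω),
            ‖gradient f ((rennalaMVR G γ p B₀ B x0 ω.1
                (fun k' => ω.2 ⟨k' % K, Nat.mod_lt _ hK⟩) k).1)‖ ^ 2
            ∂((Measure.pi fun _ => μ).prod
                (Measure.pi fun _ => Measure.pi fun _ => μ))
        ≤ 2 * (f x0 - fstar) / (γ * K) + 2 * p * σ ^ 2 / B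
            + 1 / (p * K) * (2 * σ ^ 2 / B₀) := by
  intro K hK
  obtain ⟨hp0, hp1⟩ := hp
  have hG : IsMeanSqSmoothOracle μ G (gradient f) σ ⟨Lbar, hLbar.le⟩ :=
    { measurable := hGmeas
      memLp := fun x => by
        have hnoise : MemLp (fun ξ => G x ξ - gradient f x) 2 μ := (memLp_two_iff_integrable_sq_norm
          ((hGint x).aestronglyMeasurable.sub aestronglyMeasurable_const)).2 (hVarInt x)
        simpa only [Pi.add_def, sub_add_cancel] using hnoise.add (memLp_const (gradient f x))
      integral_eq := hUnbiased
      variance_le := hVar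
      meanSq_lipschitz := hMS }
  have hfactor : 0 < 1 + (1 - p) / √(p * B) :=
    add_pos_of_pos_of_nonneg one_pos (div_nonneg (sub_nonneg.2 hp1) (Real.sqrt_nonneg _))
  have hstep : 2 * γ * Lbar * (1 + (1 - p) / √(p * B)) ≤ 1 := by
    rw [le_div_iff₀ (by positivity)] at hγ
    linarith
  simp only [rennalaMVR_eq_mvrState]
  refine (rennalaMVR_iteration_bound_general (isMinibatchSampling_prod μ B₀ B hK) hf hfstar hG
    hB₀ hB ⟨hp0, hp1⟩ hγpos hstep hK x0).trans ?_
  gcongr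
  exact le_mul_of_one_le_left (sq_nonneg σ) one_le_two
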